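/- Let A be a tree and G ≤ Aut(A). Assume G has Tits' independence property (P), leaves no nonempty proper subtree of A invariant, and does not stabilize any end of A. Then for every nontrivial g ∈ G⁺ and every edge {x,y} of A, every element of the pointwise stabilizer in G of {x,y} can be written as c₁·c₂·d₁·d₂, where each cᵢ belongs to C ∪ C·C with C the conjugacy class of g in G⁺, and each dᵢ belongs to D ∪ D·D with D the conjugacy class of g⁻¹ in G⁺. -/

import Mathlib

/-!
The proof follows Tits' simplicity argument. Write `N = H⁺` and let `C` be the `N`-conjugacy class
of `g`. By property (P) for a single edge (`split_edge`), an element `h` fixing `x` and `y` is a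
product `h₁ h₂` in which each factor fixes one of the two half-trees of `{x, y}` pointwise. If a
half-tree fixed by `hᵢ` contains the axis of some `t ∈ C ∪ C·C`, then property (P) along that axis
provides `e ∈ N` with `hᵢ = (e t e⁻¹) t⁻¹` (`exists_commutator`). Conjugating the second factor of
`h₁` past the first factor of `h₂` puts the four factors in the required order.

It remains to place such an axis in every half-tree (`exists_axis_in_half`). The main tool is
`exists_disjoint_translate`: under a group acting minimally and fixing no end, each proper subtree
has a disjoint translate, since translates that pairwise meet have a common point or determine
a fixed end. Ends are handled as flows (`IsFlow`): `v ↦` the neighbour of `v` towards the end.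
The tool is first applied to `H` and shows that `N` acts minimally (`plus_minimal`) and fixes no end
(`plus_no_flow`). Applied to `N` and the fixed tree of `g`, it yields a fixed-point-free
`t ∈ C ∪ C·C` (`exists_fixfree`), which is a translation because elements of `N` displace vertices
by even distances. Applied to `N` and the axis of `t`, it yields two conjugate axes separated by an
edge; moving that edge into the given half-tree carries one of the two axes into it.
-/

open Pointwise

namespace BSTrees

universe u

variable {V : Type u} {I : Type*}

/-- `π` is an automorphism of the graph `G`. -/
def IsAut (G : SimpleGraph V) (π : Equiv.Perm V) : Prop :=
  ∀ x y : V, G.Adj (π x) (π y) ↔ G.Adj x y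

/-- The automorphism group of `G`, as a subgroup of `Equiv.Perm V`. -/
def autGroup (G : SimpleGraph V) : Subgroup (Equiv.Perm V) where
  carrier := {π | IsAut G π}
  one_mem' := fun _ _ => Iff.rfl
  mul_mem' := fun {a b} ha hb x y => (ha (b x) (b y)).trans (hb x y)
  inv_mem' := fun {a} ha x y => by
    have h := (ha (a⁻¹ x) (a⁻¹ y)).symm
    simpa using h

/-- `z` lies on the geodesic between `x` and `y`. -/
def OnGeodesic (G : SimpleGraph V) (x y z : V) : Prop :=
  G.dist x z + G.dist z y = G.dist x y

/-- A set of vertices closed under geodesics (inducing a subtree). -/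
def GeodClosed (G : SimpleGraph V) (S : Set V) : Prop :=
  ∀ x ∈ S, ∀ y ∈ S, ∀ z, OnGeodesic G x y z → z ∈ S

/-- A rotation: an automorphism fixing some vertex. -/
def IsRotation (π : Equiv.Perm V) : Prop := ∃ v, π v = v

/-- An inversion (symmetry): an automorphism swapping the endpoints of some edge. -/
def IsInversion (G : SimpleGraph V) (π : Equiv.Perm V) : Prop :=
  ∃ x y, G.Adj x y ∧ π x = y ∧ π y = x

/-- A translation: neither a rotation nor an inversion. -/
def IsTranslation (G : SimpleGraph V) (π : Equiv.Perm V) : Prop :=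
  ¬ IsRotation π ∧ ¬ IsInversion G π

/-- `ℓ` is the translation length of `π`: the minimum of `dist s (π s)`. -/
def TranslationLengthIs (G : SimpleGraph V) (π : Equiv.Perm V) (ℓ : ℕ) : Prop :=
  IsLeast {d | ∃ s, G.dist s (π s) = d} ℓ

/-- Elements of `H` pointwise stabilizing some edge of `G`. -/
def edgeStabilizers (G : SimpleGraph V) (H : Subgroup (Equiv.Perm V)) :
    Set (Equiv.Perm V) :=
  {π | π ∈ H ∧ ∃ x y, G.Adj x y ∧ π x = x ∧ π y = y}

/-- `H⁺`: the subgroup generated by pointwise stabilizers in `H` of edges. -/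
def plusGroup (G : SimpleGraph V) (H : Subgroup (Equiv.Perm V)) :
    Subgroup (Equiv.Perm V) :=
  Subgroup.closure (edgeStabilizers G H)

/-- The group of color-preserving automorphisms of the colored tree `(G, f)`. -/
def autf (G : SimpleGraph V) (f : V → I) : Subgroup (Equiv.Perm V) where
  carrier := {π | IsAut G π ∧ ∀ v, f (π v) = f v}
  one_mem' := ⟨fun _ _ => Iff.rfl, fun _ => rfl⟩
  mul_mem' := fun {a b} ha hb =>
    ⟨fun x y => (ha.1 (b x) (b y)).trans (hb.1 x y),
     fun v => (ha.2 (b v)).trans (hb.2 v)⟩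
  inv_mem' := fun {a} ha => by
    refine ⟨fun x y => ?_, fun v => ?_⟩
    · have h := (ha.1 (a⁻¹ x) (a⁻¹ y)).symm
      simpa using h
    · have h := (ha.2 (a⁻¹ v)).symm
      simpa using h

/-- `Aut_f⁺(A)`. -/
def autfPlus (G : SimpleGraph V) (f : V → I) : Subgroup (Equiv.Perm V) :=
  plusGroup G (autf G f)

/-- `Aut⁺(A)`. -/
def autPlus (G : SimpleGraph V) : Subgroup (Equiv.Perm V) :=
  plusGroup G (autGroup G)

/-- A ray in `G`. -/
def IsRay (G : SimpleGraph V) (r : ℕ → V) : Prop :=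
  Function.Injective r ∧ ∀ n, G.Adj (r n) (r (n + 1))

/-- Two rays determine the same end iff their images have infinite intersection. -/
def SameEnd (r r' : ℕ → V) : Prop := (Set.range r ∩ Set.range r').Infinite

/-- `H` stabilizes the end of the ray `r`. -/
def StabilizesEnd (G : SimpleGraph V) (H : Subgroup (Equiv.Perm V)) (r : ℕ → V) :
    Prop :=
  ∀ π ∈ H, ∀ r' : ℕ → V, IsRay G r' → SameEnd r' r → SameEnd (π ∘ r') r

/-- `H` does not stabilize any end of `G`. -/
def NoStabilizedEnd (G : SimpleGraph V) (H : Subgroup (Equiv.Perm V)) : Prop :=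
  ¬ ∃ r : ℕ → V, IsRay G r ∧ StabilizesEnd G H r

/-- `H` leaves no nonempty proper subtree of `G` invariant. -/
def NoInvariantSubtree (G : SimpleGraph V) (H : Subgroup (Equiv.Perm V)) : Prop :=
  ¬ ∃ S : Set V, S.Nonempty ∧ S ≠ Set.univ ∧ GeodClosed G S ∧
    ∀ π ∈ H, π '' S = S

/-- A path in the tree: a nonempty geodesically closed set in which every vertex
has at most two neighbors inside the set. -/
def IsPathSet (G : SimpleGraph V) (C : Set V) : Prop :=
  C.Nonempty ∧ GeodClosed G C ∧
    ∀ v ∈ C, ∀ a ∈ C, ∀ b ∈ C, ∀ c ∈ C,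
      G.Adj v a → G.Adj v b → G.Adj v c → a = b ∨ a = c ∨ b = c

/-- `p` is a nearest-point projection onto `C`. -/
def IsProj (G : SimpleGraph V) (C : Set V) (p : V → V) : Prop :=
  ∀ x, p x ∈ C ∧ ∀ c ∈ C, G.dist x (p x) ≤ G.dist x c

/-- Tits' independence property `(P)` for `H ≤ Aut(G)`: for every path `C` with
nearest-point projection `p`, and every family of elements of the pointwise
stabilizer of `C`, there is a unique element of that stabilizer agreeing with
the `s`-th member of the family on the fiber `p⁻¹(s)`, for every `s ∈ C`. -/
def PropertyP (G : SimpleGraph V) (H : Subgroup (Equiv.Perm V)) : Prop :=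
  ∀ C : Set V, IsPathSet G C → ∀ p : V → V, IsProj G C p →
    ∀ gs : V → Equiv.Perm V,
      (∀ s ∈ C, gs s ∈ H ∧ ∀ c ∈ C, gs s c = c) →
      ∃! g : Equiv.Perm V, g ∈ H ∧ (∀ c ∈ C, g c = c) ∧
        ∀ s ∈ C, ∀ x, p x = s → g x = gs s x

/-- A group is `N`-boundedly simple if every nontrivial element is a product of
at most `N` conjugates of `g` or of `g⁻¹`, for every nontrivial `g`. -/
def IsNBoundedlySimple (Γ : Type*) [Group Γ] (N : ℕ) : Prop :=
  ∀ g h : Γ, g ≠ 1 → h ≠ 1 →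
    ∃ l : List Γ, l.length ≤ N ∧
      (∀ x ∈ l, ∃ c : Γ, x = c * g * c⁻¹ ∨ x = c * g⁻¹ * c⁻¹) ∧ l.prod = h

/-- A group is boundedly simple if it is `N`-boundedly simple for some `N`. -/
def IsBoundedlySimple (Γ : Type*) [Group Γ] : Prop :=
  ∃ N : ℕ, IsNBoundedlySimple Γ N

/-- The conjugacy class of `g` under conjugation by elements of `H`. -/
def conjClassIn {Γ : Type*} [Group Γ] (H : Subgroup Γ) (g : Γ) : Set Γ :=
  {k | ∃ c ∈ H, k = c * g * c⁻¹}

/-- A ramification point: a vertex with at least three neighbors. -/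
def IsRamification (G : SimpleGraph V) (r : V) : Prop :=
  ∃ a b c, a ≠ b ∧ a ≠ c ∧ b ≠ c ∧ G.Adj r a ∧ G.Adj r b ∧ G.Adj r c

/-- An `(n,m)`-biregular tree: a proper 2-coloring where every vertex of the
first color has exactly `n` neighbors and every vertex of the second has `m`. -/
def IsBiregular (G : SimpleGraph V) (n m : Cardinal.{u}) : Prop :=
  ∃ c : V → Bool, (∀ x y, G.Adj x y → c x ≠ c y) ∧
    (∀ v, c v = false → Cardinal.mk (G.neighborSet v) = n) ∧
    (∀ v, c v = true → Cardinal.mk (G.neighborSet v) = m)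

/-- An almost `(n,m)`-regular tree: a subdivision of the `(n,m)`-biregular tree,
described by a coloring `g : V → {0,…,k}`. -/
def IsAlmostBiregular (G : SimpleGraph V) (n m : Cardinal.{u}) : Prop :=
  ∃ k : ℕ, 1 ≤ k ∧ ∃ g : V → ℕ, (∀ v, g v ≤ k) ∧
    (∀ v, g v = 0 → (∀ w, G.Adj v w → g w = 1) ∧
      Cardinal.mk (G.neighborSet v) = n) ∧
    (∀ v, g v = k → (∀ w, G.Adj v w → g w = k - 1) ∧
      Cardinal.mk (G.neighborSet v) = m) ∧
    (∀ v, 0 < g v → g v < k → ∃ a b, a ≠ b ∧ G.Adj v a ∧ G.Adj v b ∧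
      g a = g v - 1 ∧ g b = g v + 1 ∧ ∀ w, G.Adj v w → w = a ∨ w = b)

/-- The axis of a translation: vertices of minimal displacement. -/
def axisSet (G : SimpleGraph V) (π : Equiv.Perm V) : Set V :=
  {v | ∀ w, G.dist v (π v) ≤ G.dist w (π w)}


/-! ### Metric geometry of a tree -/

section TreeMetric

variable {G : SimpleGraph V}

/-- A vertex `z` of the geodesic `[u, w]` separates `u` from `w`, so a third vertex `q` reaches at
least one of them through `z`. All the tree geometry below is derived from this fact. -/
lemma geod_or (hG : G.IsTree) {u w z : V} (hz : G.dist u z + G.dist z w = G.dist u w) (q : V) :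
    G.dist q u = G.dist q z + G.dist z u ∨ G.dist q w = G.dist q z + G.dist z w := by
  classical
  have hc := hG.connected
  have key : ∀ (a : V) (p : G.Walk q a), p.length = G.dist q a → z ∈ p.support →
      G.dist q a = G.dist q z + G.dist z a := by
    intro a p hp hzp
    have h1 := G.dist_le (p.takeUntil z hzp)
    have h2 := G.dist_le (p.dropUntil z hzp)
    have h3 := congrArg SimpleGraph.Walk.length (p.take_spec hzp)
    rw [SimpleGraph.Walk.length_append] at h3
    have h4 := hc.dist_triangle (u := q) (v := z) (w := a)
    omega
  obtain ⟨p1, hp1⟩ := hc.exists_walk_length_eq_dist u z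
  obtain ⟨p2, hp2⟩ := hc.exists_walk_length_eq_dist z w
  obtain ⟨q1, hq1⟩ := hc.exists_walk_length_eq_dist q u
  obtain ⟨q2, hq2⟩ := hc.exists_walk_length_eq_dist q w
  have hpath : (p1.append p2).IsPath := by
    apply SimpleGraph.Walk.isPath_of_length_eq_dist
    rw [SimpleGraph.Walk.length_append, hp1, hp2, hz]
  have hpath' := (q1.reverse.append q2).bypass_isPath
  have heq := (hG.isAcyclic.subsingleton_path _ _).elim ⟨_, hpath⟩ ⟨_, hpath'⟩
  have hmem : z ∈ (p1.append p2).support := by simp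
  have heq' := congrArg Subtype.val heq
  simp only at heq'
  rw [heq'] at hmem
  have hmem' := SimpleGraph.Walk.support_bypass_subset_support _ hmem
  simp only [SimpleGraph.Walk.mem_support_append_iff, SimpleGraph.Walk.support_reverse,
    List.mem_reverse] at hmem'
  rcases hmem' with h | h
  · exact Or.inl (key _ _ hq1 h)
  · exact Or.inr (key _ _ hq2 h)

lemma geod_unique (hG : G.IsTree) {u w z z' : V} (hz : G.dist u z + G.dist z w = G.dist u w)
    (hz' : G.dist u z' + G.dist z' w = G.dist u w) (h : G.dist u z = G.dist u z') : z = z' := by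
  have hc := hG.connected
  have e1 := G.dist_comm (u := u) (v := z)
  have e2 := G.dist_comm (u := u) (v := z')
  have e3 := G.dist_comm (u := z) (v := z')
  rw [← hc.dist_eq_zero_iff (u := z) (v := z')]
  rcases geod_or hG hz z' with h1 | h1 <;> omega

/-- Exactly one neighbour of `v` is closer to a given other vertex `q`. -/
lemma toward_unique (hG : G.IsTree) {v w w' q : V} (hw : G.Adj v w) (hw' : G.Adj v w')
    (h : G.dist v q = G.dist w q + 1) (h' : G.dist v q = G.dist w' q + 1) : w = w' := by
  have h1 := SimpleGraph.dist_eq_one_iff_adj.2 hw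
  have h2 := SimpleGraph.dist_eq_one_iff_adj.2 hw'
  exact geod_unique hG (u := v) (w := q) (by omega) (by omega) (by omega)

lemma adj_cases (hG : G.IsTree) {v w : V} (h : G.Adj v w) (q : V) :
    G.dist v q = G.dist w q + 1 ∨ G.dist w q = G.dist v q + 1 := by
  have := hG.dist_eq_dist_add_one_of_adj q h
  rwa [G.dist_comm (u := q), G.dist_comm (u := q)] at this

lemma exists_toward (hG : G.IsTree) {u w : V} (h : u ≠ w) :
    ∃ m, G.Adj u m ∧ G.dist u w = G.dist m w + 1 := by
  obtain ⟨p, hp⟩ := hG.connected.exists_walk_length_eq_dist u w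
  cases p with
  | nil => exact absurd rfl h
  | cons hadj p' =>
    refine ⟨_, hadj, ?_⟩
    have h1 := G.dist_le p'
    rw [SimpleGraph.Walk.length_cons] at hp
    rcases adj_cases hG hadj w with h2 | h2 <;> omega

/-- If the step from `v` to `m` goes towards `s` but not towards `z`, then `v ∈ [s, z]`. -/
lemma between_of_step (hG : G.IsTree) {v m s z : V} (hm : G.Adj v m)
    (hs : G.dist v s = G.dist m s + 1) (hz : G.dist m z = G.dist v z + 1) :
    G.dist s v + G.dist v z = G.dist s z := by
  have h1 := SimpleGraph.dist_eq_one_iff_adj.2 hm.symm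
  have e1 := G.dist_comm (u := s) (v := v)
  have e2 := G.dist_comm (u := s) (v := m)
  have e3 := G.dist_comm (u := v) (v := m)
  rcases geod_or hG (u := m) (w := z) (z := v) (by omega) s with h | h <;> omega

/-- Vertices on opposite sides of the edge `{c, d}` are joined by a geodesic through it. -/
lemma across (hG : G.IsTree) {c d z a : V} (hcd : G.Adj c d) (hz : G.dist z c < G.dist z d)
    (ha : G.dist a d < G.dist a c) : G.dist z a = G.dist z c + 1 + G.dist d a := by
  have e1 := G.dist_comm (u := z) (v := c)
  have e2 := G.dist_comm (u := z) (v := d)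
  have e3 := G.dist_comm (u := a) (v := c)
  have e4 := G.dist_comm (u := a) (v := d)
  have e5 := G.dist_comm (u := a) (v := z)
  have h1 := adj_cases hG hcd z
  have h2 := adj_cases hG hcd a
  have := between_of_step hG hcd.symm (s := z) (z := a) (v := d) (m := c) (by omega) (by omega)
  omega

lemma side_cases (hG : G.IsTree) {a b : V} (hab : G.Adj a b) (z : V) :
    G.dist z a < G.dist z b ∨ G.dist z b < G.dist z a := by
  have := hG.dist_eq_dist_add_one_of_adj z hab
  omega

/-- Half-trees are closed under geodesics. -/
lemma half_closed (hG : G.IsTree) {a b : V} (hab : G.Adj a b) :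
    GeodClosed G {z | G.dist z a < G.dist z b} := by
  intro u hu w hw z hz
  simp only [Set.mem_ofPred_eq, OnGeodesic] at *
  rcases side_cases hG hab z with h | h
  · exact h
  · have h1 := across hG hab hu h
    have h2 := across hG hab hw h
    have h3 := hG.connected.dist_triangle (u := u) (v := a) (w := w)
    have e1 := G.dist_comm (u := w) (v := a)
    have e2 := G.dist_comm (u := w) (v := z)
    omega

/-- Gate property: a nearest point of a subtree `S` to `q` lies on every geodesic from `q`
to `S`. -/
lemma gate (hG : G.IsTree) {S : Set V} (hS : GeodClosed G S) {q s : V} (hs : s ∈ S)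
    (hmin : ∀ c ∈ S, G.dist q s ≤ G.dist q c) {u : V} (hu : u ∈ S) :
    G.dist q u = G.dist q s + G.dist s u := by
  by_cases hsu : s = u
  · subst hsu; simp
  obtain ⟨m, hm, hd⟩ := exists_toward hG hsu
  have h1 := SimpleGraph.dist_eq_one_iff_adj.2 hm
  have hbet : G.dist s m + G.dist m u = G.dist s u := by omega
  have hmS : m ∈ S := hS s hs u hu m hbet
  have h2 := hmin m hmS
  have h3 := adj_cases hG hm q
  have e1 := G.dist_comm (u := q) (v := s)
  have e2 := G.dist_comm (u := q) (v := m)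
  have e3 := G.dist_comm (u := s) (v := m)
  rcases geod_or hG hbet q with h | h <;> omega

lemma exists_nearest {S : Set V} (hS : S.Nonempty) (q : V) :
    ∃ s ∈ S, ∀ c ∈ S, G.dist q s ≤ G.dist q c := by
  obtain ⟨s, hs, hmin⟩ :=
    WellFounded.has_min (InvImage.wf (fun c => G.dist q c) Nat.lt_wfRel.wf) S hS
  exact ⟨s, hs, fun c hc => not_lt.1 (hmin c hc)⟩

lemma nearest_unique (hG : G.IsTree) {S : Set V} (hS : GeodClosed G S) {q s s' : V} (hs : s ∈ S)
    (hmin : ∀ c ∈ S, G.dist q s ≤ G.dist q c) (hs' : s' ∈ S)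
    (hmin' : ∀ c ∈ S, G.dist q s' ≤ G.dist q c) : s = s' := by
  rw [← hG.connected.dist_eq_zero_iff (u := s) (v := s')]
  have h1 := gate hG hS hs hmin hs'
  have h2 := hmin' s hs
  omega

/-- Two vertex sets have a closest pair of points. -/
lemma exists_nearest_pair {S S' : Set V} (hS : S.Nonempty) (hS' : S'.Nonempty) :
    ∃ s ∈ S, ∃ s' ∈ S', ∀ c ∈ S, ∀ c' ∈ S', G.dist s s' ≤ G.dist c c' := by
  obtain ⟨s, hs, hmin⟩ :=
    WellFounded.has_min (InvImage.wf (fun c : V × V => G.dist c.1 c.2) Nat.lt_wfRel.wf)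
      (S ×ˢ S') (hS.prod hS')
  exact ⟨s.1, hs.1, s.2, hs.2, fun c hc c' hc' => not_lt.1 (hmin (c, c') ⟨hc, hc'⟩)⟩

/-- Two disjoint subtrees lie on opposite sides of some edge. -/
lemma exists_separating_edge (hG : G.IsTree) {S S' : Set V} (hS : GeodClosed G S)
    (hS' : GeodClosed G S') (hne : S.Nonempty) (hne' : S'.Nonempty)
    (hdisj : ∀ z ∈ S, z ∉ S') :
    ∃ c d, G.Adj c d ∧ (∀ u ∈ S, G.dist u c < G.dist u d) ∧
      ∀ u ∈ S', G.dist u d < G.dist u c := by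
  obtain ⟨s, hs, s', hs', hmin⟩ := exists_nearest_pair (G := G) hne hne'
  have hss : s ≠ s' := by rintro rfl; exact hdisj s hs hs'
  obtain ⟨m, hm, hd⟩ := exists_toward hG hss
  refine ⟨s, m, hm, fun u hu => ?_, fun u hu => ?_⟩
  · have h1 := gate hG hS (q := s') hs (fun c hc => by
      rw [G.dist_comm (u := s'), G.dist_comm (u := s')]; exact hmin c hc s' hs') hu
    have h2 := hG.connected.dist_triangle (u := s') (v := m) (w := u)
    have e1 := G.dist_comm (u := s') (v := m)
    have e2 := G.dist_comm (u := s') (v := s)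
    have e3 := G.dist_comm (u := s) (v := u)
    have e4 := G.dist_comm (u := m) (v := u)
    omega
  · have h1 := gate hG hS' (q := s) hs' (fun c hc => hmin s hs c hc) hu
    have h2 := hG.connected.dist_triangle (u := m) (v := s') (w := u)
    have e3 := G.dist_comm (u := s) (v := u)
    have e4 := G.dist_comm (u := m) (v := u)
    omega

/-- The closest pair between two disjoint subtrees is unique: the bridge is canonical. -/
lemma bridge_unique (hG : G.IsTree) {S S' : Set V} (hS : GeodClosed G S)
    (hS' : GeodClosed G S') (hdisj : ∀ z ∈ S, z ∉ S') {s s' u u' : V}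
    (hs : s ∈ S) (hs' : s' ∈ S') (hmin : ∀ c ∈ S, ∀ c' ∈ S', G.dist s s' ≤ G.dist c c')
    (hu : u ∈ S) (hu' : u' ∈ S') (heq : G.dist u u' = G.dist s s') : u = s := by
  have hss : s ≠ s' := by rintro rfl; exact hdisj s hs hs'
  have hpos := hG.connected.pos_dist_of_ne hss
  have h1 := gate hG hS (q := s') hs (fun c hc => by
      rw [G.dist_comm (u := s'), G.dist_comm (u := s')]; exact hmin c hc s' hs') hu
  have h2 := gate hG hS' (q := s) hs' (fun c hc => hmin s hs c hc) hu'
  have h3 := gate hG hS' (q := u) hu' (fun c hc => by rw [heq]; exact hmin u hu c hc) hs'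
  rw [← hG.connected.dist_eq_zero_iff (u := u) (v := s)]
  have e1 := G.dist_comm (u := s') (v := s)
  have e2 := G.dist_comm (u := s) (v := u)
  have e3 := G.dist_comm (u := s') (v := u)
  have e4 := G.dist_comm (u := u') (v := u)
  have e5 := G.dist_comm (u := u') (v := s)
  have e6 := G.dist_comm (u := u') (v := s')
  rcases geod_or hG (u := s') (w := u) (z := s) (by omega) u' with h | h <;> omega

/-- Trees are bipartite, so every triangle of distances has even perimeter. -/
lemma even_perimeter (hG : G.IsTree) (u v w : V) :
    (G.dist u v + G.dist v w + G.dist u w) % 2 = 0 := by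
  induction hn : G.dist u v generalizing u with
  | zero =>
    rw [hG.connected.dist_eq_zero_iff] at hn
    subst hn
    omega
  | succ n ih =>
    have hne : u ≠ v := by rintro rfl; simp at hn
    obtain ⟨m, hm, hd⟩ := exists_toward hG hne
    have h1 := ih m (by omega)
    rcases adj_cases hG hm w with h | h <;> omega

/-- Of two half-trees bounded by an edge `{c, d}` with `c` on the `b`-side of `{a, b}`, one is
contained in the `b`-side of `{a, b}`. -/
lemma half_subset (hG : G.IsTree) {a b c d : V} (hcd : G.Adj c d)
    (hc : G.dist c b < G.dist c a) :
    (∀ z, G.dist z c < G.dist z d → G.dist z b < G.dist z a) ∨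
      ∀ z, G.dist z d < G.dist z c → G.dist z b < G.dist z a := by
  have e2 := G.dist_comm (u := c) (v := a)
  have e3 := G.dist_comm (u := d) (v := a)
  rcases side_cases hG hcd a with h | h
  · right
    intro z hz
    have h1 := across hG hcd.symm hz h
    have h2 := hG.connected.dist_triangle (u := z) (v := c) (w := b)
    have h3 := hG.dist_eq_dist_add_one_of_adj z hcd
    omega
  · left
    intro z hz
    have h1 := across hG hcd hz h
    have h2 := hG.connected.dist_triangle (u := z) (v := c) (w := b)
    have h3 := hG.dist_eq_dist_add_one_of_adj a hcd
    omega

end TreeMetric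

/-! ### Automorphisms and the group generated by edge stabilizers -/

section Automorphisms

variable {G : SimpleGraph V} {H : Subgroup (Equiv.Perm V)}

lemma perm_apply_inv (π : Equiv.Perm V) (v : V) : π (π⁻¹ v) = v := by simp

lemma perm_inv_apply (π : Equiv.Perm V) (v : V) : π⁻¹ (π v) = v := by simp

lemma aut_dist_le (hG : G.IsTree) {π : Equiv.Perm V} (hπ : π ∈ autGroup G) (u v : V) :
    G.dist (π u) (π v) ≤ G.dist u v := by
  obtain ⟨p, hp⟩ := hG.connected.exists_walk_length_eq_dist u v
  let f : G →g G := ⟨π, fun {a b} h => (hπ a b).2 h⟩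
  have := G.dist_le (p.map f)
  rw [SimpleGraph.Walk.length_map, hp] at this
  exact this

lemma aut_dist (hG : G.IsTree) {π : Equiv.Perm V} (hπ : π ∈ autGroup G) (u v : V) :
    G.dist (π u) (π v) = G.dist u v := by
  apply le_antisymm (aut_dist_le hG hπ u v)
  have := aut_dist_le hG (inv_mem hπ) (π u) (π v)
  simpa using this

lemma plus_le : plusGroup G H ≤ H := by
  rw [plusGroup, Subgroup.closure_le]
  exact fun π hπ => hπ.1

lemma plus_of_fix {π : Equiv.Perm V} {x y : V} (hπ : π ∈ H) (hxy : G.Adj x y) (hx : π x = x)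
    (hy : π y = y) : π ∈ plusGroup G H :=
  Subgroup.subset_closure ⟨hπ, x, y, hxy, hx, hy⟩

lemma plus_conj (hH : H ≤ autGroup G) {h k : Equiv.Perm V} (hh : h ∈ H)
    (hk : k ∈ plusGroup G H) : h * k * h⁻¹ ∈ plusGroup G H := by
  induction hk using Subgroup.closure_induction with
  | mem π hπ =>
    obtain ⟨hπH, x, y, hxy, hx, hy⟩ := hπ
    exact plus_of_fix (x := h x) (y := h y) (H.mul_mem (H.mul_mem hh hπH) (H.inv_mem hh))
      ((hH hh x y).2 hxy) (by simp [hx]) (by simp [hy])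
  | one => simp [one_mem]
  | mul a b _ _ ha hb =>
    have : h * (a * b) * h⁻¹ = (h * a * h⁻¹) * (h * b * h⁻¹) := by group
    rw [this]; exact mul_mem ha hb
  | inv a _ ha =>
    have : h * a⁻¹ * h⁻¹ = (h * a * h⁻¹)⁻¹ := by group
    rw [this]; exact inv_mem ha

/-- Elements of `H⁺` preserve the bipartition of the tree; in particular they invert no edge. -/
lemma plus_even (hG : G.IsTree) (hH : H ≤ autGroup G) {k : Equiv.Perm V}
    (hk : k ∈ plusGroup G H) (v : V) : G.dist v (k v) % 2 = 0 := by
  induction hk using Subgroup.closure_induction generalizing v with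
  | mem π hπ =>
    obtain ⟨hπH, x, y, hxy, hx, hy⟩ := hπ
    have h1 := even_perimeter hG v x (π v)
    have h2 := aut_dist hG (hH hπH) x v
    rw [hx, G.dist_comm (u := x) (v := v)] at h2
    omega
  | one => simp
  | mul a b _ _ ha hb =>
    have h1 := even_perimeter hG v (b v) (a (b v))
    have h2 := ha (b v)
    have h3 := hb v
    rw [Equiv.Perm.mul_apply]
    omega
  | inv a _ ha =>
    have h1 := ha (a⁻¹ v)
    rw [perm_apply_inv] at h1
    rw [G.dist_comm]; exact h1

/-- The sublevel sets of the displacement of an automorphism are subtrees. -/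
lemma disp_closed (hG : G.IsTree) {π : Equiv.Perm V} (hπ : π ∈ autGroup G) (l : ℕ) :
    GeodClosed G {v | G.dist v (π v) ≤ l} := by
  intro u hu w hw z hz
  simp only [Set.mem_ofPred_eq, OnGeodesic] at *
  have key : ∀ a, G.dist a (π a) ≤ l → G.dist (π z) a = G.dist (π z) z + G.dist z a →
      G.dist z (π z) ≤ l := by
    intro a ha h
    have h1 := hG.connected.dist_triangle (u := a) (v := π a) (w := π z)
    have h2 := aut_dist hG hπ a z
    have e1 := G.dist_comm (u := π z) (v := a)
    have e2 := G.dist_comm (u := π z) (v := z)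
    have e3 := G.dist_comm (u := a) (v := z)
    omega
  rcases geod_or hG hz (π z) with h | h
  · exact key u hu h
  · exact key w hw h

lemma fix_closed (hG : G.IsTree) {π : Equiv.Perm V} (hπ : π ∈ autGroup G) :
    GeodClosed G {v | π v = v} := by
  have h := disp_closed hG hπ 0
  have : {v | π v = v} = {v | G.dist v (π v) ≤ 0} := by
    ext v
    simp only [Set.mem_ofPred_eq, Nat.le_zero, hG.connected.dist_eq_zero_iff]
    exact eq_comm
  rwa [this]

/-- Preimages of a subtree under automorphisms are subtrees. -/
lemma closed_preimage (hG : G.IsTree) {π : Equiv.Perm V} (hπ : π ∈ autGroup G) {S : Set V}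
    (hS : GeodClosed G S) : GeodClosed G {v | π v ∈ S} := by
  intro u hu w hw z hz
  refine hS _ hu _ hw _ ?_
  simp only [OnGeodesic, aut_dist hG hπ] at *
  exact hz

lemma connected_induct (hG : G.IsTree) {P : V → Prop} {v₀ : V} (h₀ : P v₀)
    (hstep : ∀ v w, G.Adj v w → P v → P w) (v : V) : P v := by
  obtain ⟨p⟩ := hG.connected v₀ v
  induction p with
  | nil => exact h₀
  | cons hadj _ ih => exact ih (hstep _ _ hadj h₀)

/-- If every vertex has at most two neighbours, edge stabilizers are trivial, and so is `H⁺`. -/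
lemma plus_trivial_of_deg_two (hG : G.IsTree) (hH : H ≤ autGroup G) (α β : V → V)
    (hdeg : ∀ v w, G.Adj v w → w = α v ∨ w = β v) {k : Equiv.Perm V}
    (hk : k ∈ plusGroup G H) : k = 1 := by
  have : plusGroup G H ≤ ⊥ := by
    rw [plusGroup, Subgroup.closure_le]
    rintro π ⟨hπH, x, y, hxy, hx, hy⟩
    have hfix : ∀ v, π v = v ∧ ∃ w, G.Adj v w ∧ π w = w := by
      refine connected_induct hG (v₀ := x) ⟨hx, y, hxy, hy⟩ ?_
      rintro v u hvu ⟨hv, w, hvw, hw⟩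
      refine ⟨?_, v, hvu.symm, hv⟩
      have h1 : G.Adj v (π u) := by
        have := (hH hπH v u).2 hvu
        rwa [hv] at this
      by_cases huw : u = w
      · rw [huw, hw]
      · have h2 : π u ≠ w := fun h => huw (π.injective (h.trans hw.symm))
        have a1 := hdeg v u hvu
        have a2 := hdeg v w hvw
        have a3 := hdeg v (π u) h1
        grind
    simp only [Subgroup.coe_bot, Set.mem_singleton_iff]
    ext v
    exact (hfix v).1
  exact (Subgroup.mem_bot).1 (this hk)

end Automorphisms

/-! ### Flows: vertex-wise descriptions of ends -/

section Flows

variable {G : SimpleGraph V} {H K : Subgroup (Equiv.Perm V)}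

/-- A flow encodes an end of the tree: `n v` is the neighbour of `v` in the direction of the
end. Every edge is oriented by exactly one of its endpoints. -/
structure IsFlow (G : SimpleGraph V) (n : V → V) : Prop where
  adj : ∀ v, G.Adj v (n v)
  nonback : ∀ v, n (n v) ≠ v
  edge : ∀ v w, G.Adj v w → n v = w ∨ n w = v

/-- A flow is equivariant when the group fixes the corresponding end. -/
def IsEquivariant (K : Subgroup (Equiv.Perm V)) (n : V → V) : Prop :=
  ∀ k ∈ K, ∀ v, n (k v) = k (n v)

lemma IsFlow.dist_iterate (hG : G.IsTree) {n : V → V} (hn : IsFlow G n) (v : V) (i : ℕ) :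
    G.dist v (n^[i] v) = i ∧ G.dist v (n^[i + 1] v) = i + 1 := by
  induction i with
  | zero => simp [hn.adj v]
  | succ i ih =>
    refine ⟨ih.2, ?_⟩
    rw [Function.iterate_succ_apply'] at ih ⊢
    rw [Function.iterate_succ_apply']
    set z := n^[i] v
    have h1 := SimpleGraph.dist_eq_one_iff_adj.2 (hn.adj (n z))
    rcases adj_cases hG (hn.adj (n z)) v with h | h
    · have e1 := G.dist_comm (u := v) (v := z)
      have e2 := G.dist_comm (u := v) (v := n z)
      have := toward_unique hG (hn.adj (n z)) (hn.adj z).symm h (by omega)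
      exact absurd this (hn.nonback z)
    · rw [G.dist_comm (u := v), h, G.dist_comm (v := v), ih.2]

lemma IsFlow.isRay (hG : G.IsTree) {n : V → V} (hn : IsFlow G n) (v : V) :
    IsRay G (fun i => n^[i] v) := by
  refine ⟨fun i j hij => ?_, fun i => ?_⟩
  · have h1 := (hn.dist_iterate hG v i).1
    have h2 := (hn.dist_iterate hG v j).1
    simp only at hij
    rw [hij] at h1
    omega
  · simp only [Function.iterate_succ_apply']
    exact hn.adj _

/-- Any two flow lines merge. -/
lemma IsFlow.merge (hG : G.IsTree) {n : V → V} (hn : IsFlow G n) (v w : V) :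
    ∃ i j, n^[i] v = n^[j] w := by
  refine connected_induct hG (P := fun w => ∃ i j, n^[i] v = n^[j] w) (v₀ := v) ⟨0, 0, rfl⟩ ?_ w
  rintro a b hab ⟨i, j, hij⟩
  rcases hn.edge a b hab with h | h
  · refine ⟨i + 1, j, ?_⟩
    rw [Function.iterate_succ_apply', hij, ← Function.iterate_succ_apply' n j a,
      Function.iterate_succ_apply, h]
  · exact ⟨i, j + 1, by rw [hij, Function.iterate_succ_apply, h]⟩

lemma no_flow_of_noStabilizedEnd (hG : G.IsTree) (hend : NoStabilizedEnd G H) {n : V → V}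
    (hn : IsFlow G n) (he : IsEquivariant H n) : False := by
  obtain ⟨v⟩ := hG.connected.nonempty
  refine hend ⟨_, hn.isRay hG v, ?_⟩
  intro π hπ r' _ hsame
  unfold SameEnd at *
  obtain ⟨i, j, hij⟩ := hn.merge hG v (π v)
  have hiter : ∀ m, π (n^[m] v) = n^[m] (π v) := by
    intro m
    induction m with
    | zero => rfl
    | succ m ih => rw [Function.iterate_succ_apply', Function.iterate_succ_apply', ← ih, he π hπ]
  have h1 : (π '' (Set.range r' ∩ Set.range fun i => n^[i] v)).Infinite :=
    hsame.image π.injective.injOn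
  have hfin : ((fun m => n^[m] (π v)) '' Set.Iio j).Finite := (Set.finite_Iio j).image _
  refine (h1.sdiff hfin).mono ?_
  rintro _ ⟨⟨z, ⟨⟨a, rfl⟩, ⟨m, hm⟩⟩, rfl⟩, hz⟩
  refine ⟨⟨a, rfl⟩, ?_⟩
  simp only at hm
  rw [← hm, hiter] at hz ⊢
  have hjm : j ≤ m := by
    by_contra hlt
    exact hz ⟨m, not_le.1 hlt, rfl⟩
  refine ⟨m - j + i, ?_⟩
  simp only
  rw [Function.iterate_add_apply, hij, ← Function.iterate_add_apply, Nat.sub_add_cancel hjm]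

/-- If the flow at `z` points away from `u`, the flow at `u` points towards `z`. -/
lemma IsFlow.toward (hG : G.IsTree) {n : V → V} (hn : IsFlow G n) {z u : V} (hzu : u ≠ z)
    (h : G.dist (n z) u = G.dist z u + 1) : G.dist u z = G.dist (n u) z + 1 := by
  induction hd : G.dist u z generalizing u with
  | zero => exact absurd (hG.connected.dist_eq_zero_iff.1 hd) hzu
  | succ k ih =>
    obtain ⟨m, hm, hmd⟩ := exists_toward hG hzu
    have hnu : n u = m := by
      by_cases hmz : m = z
      · subst hmz
        refine (hn.edge u m hm).resolve_right fun h' => ?_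
        rw [h'] at h
        simp at h
      · have e1 := G.dist_comm (u := u) (v := z)
        have e2 := G.dist_comm (u := m) (v := z)
        have e3 := SimpleGraph.dist_eq_one_iff_adj.2 hm.symm
        have t1 := hG.connected.dist_triangle (u := n z) (v := m) (w := u)
        have t2 := adj_cases hG (hn.adj z) m
        have h3 := ih hmz (by omega) (by omega)
        refine (hn.edge u m hm).resolve_right fun h' => ?_
        rw [h'] at h3
        omega
    rw [hnu]; omega

/-- A family of pairwise intersecting subtrees without a common point, all translates
of `S` under `K`, determines an end fixed by `K`: seen from `v`, all members of the family missing
`v` lie in one direction. -/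
lemma exists_flow (hG : G.IsTree) (hK : K ≤ autGroup G) {S : Set V} (hS : GeodClosed G S)
    (hmeet : ∀ k ∈ K, ∃ z ∈ S, k z ∈ S) (hempty : ∀ v, ∃ k ∈ K, k v ∉ S) :
    ∃ n, IsFlow G n ∧ IsEquivariant K n := by
  have hmeet' : ∀ k ∈ K, ∀ k' ∈ K, ∃ z, k z ∈ S ∧ k' z ∈ S := by
    intro k hk k' hk'
    obtain ⟨z, hz, hz'⟩ := hmeet (k' * k⁻¹) (K.mul_mem hk' (K.inv_mem hk))
    exact ⟨k⁻¹ z, by simpa using hz, by simpa using hz'⟩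
  have hdir : ∀ v, ∃ m, G.Adj v m ∧
      ∀ k ∈ K, k v ∉ S → ∀ s, k s ∈ S → G.dist v s = G.dist m s + 1 := by
    intro v
    obtain ⟨k₀, hk₀, hv₀⟩ := hempty v
    obtain ⟨s₀, hs₀, -⟩ := hmeet' k₀ hk₀ k₀ hk₀
    have hne : v ≠ s₀ := by rintro rfl; exact hv₀ hs₀
    obtain ⟨m, hm, hd⟩ := exists_toward hG hne
    refine ⟨m, hm, fun k hk hv s hs => ?_⟩
    have step : ∀ k ∈ K, k v ∉ S → ∀ s s', k s ∈ S → k s' ∈ S →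
        G.dist v s = G.dist m s + 1 → G.dist v s' = G.dist m s' + 1 := by
      intro k hk hv s s' hs hs' h
      refine (adj_cases hG hm s').resolve_right fun h' => hv ?_
      exact closed_preimage hG (hK hk) hS s hs s' hs' v (between_of_step hG hm h h')
    obtain ⟨z, hz, hz'⟩ := hmeet' k₀ hk₀ k hk
    exact step k hk hv z s hz' hs (step k₀ hk₀ hv₀ s₀ z hs₀ hz hd)
  choose n hn hdirn using hdir
  refine ⟨n, ⟨hn, fun v hback => ?_, fun v w hvw => ?_⟩, fun k hk v => ?_⟩
  · obtain ⟨k, hk, hv⟩ := hempty v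
    obtain ⟨k', hk', hv'⟩ := hempty (n v)
    obtain ⟨z, hz, hz'⟩ := hmeet' k hk k' hk'
    have h1 := hdirn v k hk hv z hz
    have h2 := hdirn (n v) k' hk' hv' z hz'
    rw [hback] at h2
    omega
  · by_contra! hcon
    obtain ⟨k, hk, hv⟩ := hempty v
    obtain ⟨s, hs, -⟩ := hmeet' k hk k hk
    have h1 := hdirn v k hk hv s hs
    have hkw : k w ∉ S := by
      intro hw
      have h2 := hdirn v k hk hv w hw
      rw [SimpleGraph.dist_eq_one_iff_adj.2 hvw] at h2
      exact hcon.1 (hG.connected.dist_eq_zero_iff.1 (by omega))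
    have h2 := hdirn w k hk hkw s hs
    rcases adj_cases hG hvw s with h | h
    · exact hcon.1 (toward_unique hG (hn v) hvw h1 h)
    · exact hcon.2 (toward_unique hG (hn w) hvw.symm h2 h)
  · obtain ⟨k', hk', hv'⟩ := hempty (k v)
    obtain ⟨s, hs, -⟩ := hmeet' k' hk' k' hk'
    have h1 := hdirn (k v) k' hk' hv' s hs
    have h2 := hdirn v (k' * k) (K.mul_mem hk' hk) hv' (k⁻¹ s) (by simpa using hs)
    rw [← aut_dist hG (hK hk) v, ← aut_dist hG (hK hk) (n v)] at h2
    simp only [perm_apply_inv] at h2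
    exact toward_unique hG (hn (k v)) ((hK hk v (n v)).2 (hn v)) h1 h2

end Flows

/-! ### The action of the plus group: minimality and absence of fixed ends -/

section Minimality

variable {G : SimpleGraph V} {H K : Subgroup (Equiv.Perm V)}

lemma image_eq_of_invariant {S : Set V} (h : ∀ k ∈ K, ∀ v ∈ S, k v ∈ S) :
    ∀ π ∈ K, π '' S = S := by
  intro π hπ
  ext v
  constructor
  · rintro ⟨w, hw, rfl⟩
    exact h π hπ w hw
  · intro hv
    exact ⟨π⁻¹ v, h _ (K.inv_mem hπ) v hv, perm_apply_inv π v⟩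

/-- For a group acting minimally and fixing no end, every proper subtree has a disjoint
translate. -/
lemma exists_disjoint_translate (hG : G.IsTree) (hK : K ≤ autGroup G)
    (hmin : NoInvariantSubtree G K) (hflow : ∀ n, IsFlow G n → IsEquivariant K n → False)
    {S : Set V} (hS : GeodClosed G S) (hun : S ≠ Set.univ) :
    ∃ k ∈ K, ∀ z ∈ S, k z ∉ S := by
  by_contra! hmeet
  by_cases hempty : ∀ v, ∃ k ∈ K, k v ∉ S
  · obtain ⟨n, hn, he⟩ := exists_flow hG hK hS hmeet hempty
    exact hflow n hn he
  · push Not at hempty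
    obtain ⟨v₀, hv₀⟩ := hempty
    refine hmin ⟨{v | ∀ k ∈ K, k v ∈ S}, ⟨v₀, hv₀⟩, fun h => hun ?_, ?_,
      image_eq_of_invariant ?_⟩
    · ext v
      have hv : v ∈ {v | ∀ k ∈ K, k v ∈ S} := by rw [h]; trivial
      simpa using hv 1 K.one_mem
    · intro u hu w hw z hz k hk
      exact closed_preimage hG (hK hk) hS u (hu k hk) w (hw k hk) z hz
    · intro k hk v hv k' hk'
      exact hv (k' * k) (K.mul_mem hk' hk)

/-- A nontrivial normal subgroup of a group acting minimally without fixed end acts minimally: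
two disjoint invariant subtrees would force a fixed vertex at the end of their bridge. -/
lemma plus_minimal (hG : G.IsTree) (hH : H ≤ autGroup G) (hsub : NoInvariantSubtree G H)
    (hend : NoStabilizedEnd G H) {g : Equiv.Perm V} (hg : g ∈ plusGroup G H) (hg1 : g ≠ 1) :
    NoInvariantSubtree G (plusGroup G H) := by
  rintro ⟨S, hne, hun, hcl, hinv⟩
  have hinv' : ∀ k ∈ plusGroup G H, ∀ v ∈ S, k v ∈ S := fun k hk v hv => by
    rw [← hinv k hk]; exact ⟨v, hv, rfl⟩
  obtain ⟨h, hh, hdis⟩ := exists_disjoint_translate hG hH hsub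
    (fun n hn he => no_flow_of_noStabilizedEnd hG hend hn he) hcl hun
  have hcl' := closed_preimage hG (hH hh) hcl
  have hne' : {v | h v ∈ S}.Nonempty := by
    obtain ⟨s, hs⟩ := hne
    exact ⟨h⁻¹ s, by simpa using hs⟩
  obtain ⟨s, hs, s', hs', hm⟩ := exists_nearest_pair (G := G) hne hne'
  have hfix : ∀ k ∈ plusGroup G H, k s = s := by
    intro k hk
    refine bridge_unique hG hcl hcl' hdis hs hs' hm (hinv' k hk s hs) (u' := k s') ?_
      (aut_dist hG (hH (plus_le hk)) s s')
    have := hinv' _ (plus_conj hH hh hk) (h s') hs'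
    simpa using this
  refine hsub ⟨{v | ∀ k ∈ plusGroup G H, k v = v}, ⟨s, hfix⟩, fun hU => hg1 ?_, ?_,
    image_eq_of_invariant ?_⟩
  · ext v
    have hv : v ∈ {v | ∀ k ∈ plusGroup G H, k v = v} := by rw [hU]; trivial
    exact hv g hg
  · intro u hu w hw z hz k hk
    exact fix_closed hG (hH (plus_le hk)) u (hu k hk) w (hw k hk) z hz
  · intro a ha v hv k hk
    have h1 := hv _ (plus_conj hH (H.inv_mem ha) hk)
    simp only [inv_inv, Equiv.Perm.mul_apply] at h1
    rw [← perm_apply_inv a (k (a v)), h1]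

/-- The plus group fixes no end: otherwise the line between two ends fixed by it would be
the whole tree by minimality, and its edge stabilizers would be trivial. -/
lemma plus_no_flow (hG : G.IsTree) (hH : H ≤ autGroup G) (hsub : NoInvariantSubtree G H)
    (hend : NoStabilizedEnd G H) {g : Equiv.Perm V} (hg : g ∈ plusGroup G H) (hg1 : g ≠ 1)
    (n : V → V) (hn : IsFlow G n) (he : IsEquivariant (plusGroup G H) n) : False := by
  by_cases hall : IsEquivariant H n
  · exact no_flow_of_noStabilizedEnd hG hend hn hall
  unfold IsEquivariant at hall
  push Not at hall
  obtain ⟨a, ha, v₀, hv₀⟩ := hall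
  -- `n'` describes the translate by `a⁻¹` of the end described by `n`.
  set n' : V → V := fun v => a⁻¹ (n (a v)) with hn'def
  have ha' := hH (H.inv_mem ha)
  have hn' : IsFlow G n' := by
    refine ⟨fun v => ?_, fun v h => ?_, fun v w hvw => ?_⟩
    · have := (ha' _ _).2 (hn.adj (a v))
      rwa [perm_inv_apply] at this
    · simp only [hn'def, perm_apply_inv] at h
      exact hn.nonback (a v) (by rw [← perm_apply_inv a (n (n (a v))), h])
    · rcases hn.edge _ _ ((hH ha v w).2 hvw) with h | h
      · left; simp [hn'def, h]
      · right; simp [hn'def, h]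
  have he' : IsEquivariant (plusGroup G H) n' := by
    intro k hk v
    have h1 := he _ (plus_conj hH ha hk) (a v)
    simp only [Equiv.Perm.mul_apply, perm_inv_apply] at h1
    simp only [hn'def, h1, perm_inv_apply]
  have huniv : {v | n v ≠ n' v} = Set.univ := by
    by_contra hun
    refine plus_minimal hG hH hsub hend hg hg1 ⟨{v | n v ≠ n' v}, ⟨v₀, ?_⟩, hun, ?_,
      image_eq_of_invariant ?_⟩
    · intro h
      exact hv₀ (by rw [h, hn'def]; simp)
    · intro u hu w hw z hz hzz
      have key : ∀ b, n b ≠ n' b → G.dist (n z) b = G.dist (n z) z + G.dist z b → False := by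
        intro b hb hd
        have h1 := SimpleGraph.dist_eq_one_iff_adj.2 (hn.adj z).symm
        have hbz : b ≠ z := by rintro rfl; exact hb hzz
        have h2 := hn.toward hG hbz (by omega)
        have h3 := hn'.toward hG hbz (by rw [← hzz]; omega)
        exact hb (toward_unique hG (hn.adj b) (hn'.adj b) h2 h3)
      rcases geod_or hG hz (n z) with h | h
      · exact key u hu h
      · exact key w hw h
    · intro k hk v hv h
      rw [he k hk, he' k hk] at h
      exact hv (k.injective h)
  refine hg1 (plus_trivial_of_deg_two hG hH n n' (fun v w hvw => ?_) hg)
  by_contra! hcon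
  have hw : w ∈ {v | n v ≠ n' v} := by rw [huniv]; trivial
  have h1 := (hn.edge v w hvw).resolve_left (Ne.symm hcon.1)
  have h2 := (hn'.edge v w hvw).resolve_left (Ne.symm hcon.2)
  exact hw (h1.trans h2.symm)

lemma plus_disjoint_translate (hG : G.IsTree) (hH : H ≤ autGroup G)
    (hsub : NoInvariantSubtree G H) (hend : NoStabilizedEnd G H) {g : Equiv.Perm V}
    (hg : g ∈ plusGroup G H) (hg1 : g ≠ 1)
    {S : Set V} (hS : GeodClosed G S) (hun : S ≠ Set.univ) :
    ∃ k ∈ plusGroup G H, ∀ z ∈ S, k z ∉ S :=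
  exists_disjoint_translate hG (plus_le.trans hH) (plus_minimal hG hH hsub hend hg hg1)
    (plus_no_flow hG hH hsub hend hg hg1) hS hun

end Minimality

/-! ### Fixed-point-free elements and their axes -/

section Axes

variable {G : SimpleGraph V} {H K : Subgroup (Equiv.Perm V)}

/-- An automorphism `b` with a fixed point fixes the midpoint of `[v, b v]`. -/
lemma midpoint_fixed (hG : G.IsTree) {b : Equiv.Perm V} (hb : b ∈ autGroup G)
    (hne : {z | b z = z}.Nonempty) (v : V) :
    ∃ s, b s = s ∧ G.dist v s + G.dist s (b v) = G.dist v (b v) ∧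
      G.dist v s = G.dist s (b v) := by
  obtain ⟨s, hs, hmin⟩ := exists_nearest (G := G) hne v
  have hs' : b s = s := hs
  have heq : G.dist v s = G.dist s (b v) := by
    have := aut_dist hG hb s v
    rw [hs'] at this
    rw [this, G.dist_comm]
  refine ⟨s, hs, ?_, heq⟩
  by_cases hsv : s = v
  · subst hsv; simp
  obtain ⟨m, hm, hd⟩ := exists_toward hG hsv
  have hbm : G.Adj s (b m) := by
    have := (hb s m).2 hm
    rwa [hs'] at this
  have hd' : G.dist s (b v) = G.dist (b m) (b v) + 1 := by
    rw [aut_dist hG hb, ← heq, ← hd, G.dist_comm]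
  have e1 := G.dist_comm (u := v) (v := s)
  have e2 := G.dist_comm (u := v) (v := m)
  have hne' : b m ≠ m := by
    intro h
    have := hmin m h
    omega
  have hnb : G.dist (b m) v = G.dist s v + 1 :=
    (adj_cases hG hbm v).resolve_left fun h => hne' (toward_unique hG hbm hm h hd)
  have h4 := between_of_step hG hbm hd' hnb
  have e3 := G.dist_comm (u := b v) (v := s)
  have e4 := G.dist_comm (u := b v) (v := v)
  omega

/-- The product of two automorphisms with fixed points but without a common one is
fixed-point-free. -/
lemma mul_no_fix (hG : G.IsTree) {a b : Equiv.Perm V} (ha : a ∈ autGroup G)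
    (hb : b ∈ autGroup G) (hane : {z | a z = z}.Nonempty) (hbne : {z | b z = z}.Nonempty)
    (hdis : ∀ z, a z = z → b z ≠ z) (v : V) : (a * b) v ≠ v := by
  intro h
  rw [Equiv.Perm.mul_apply] at h
  obtain ⟨s, hs, h1, h2⟩ := midpoint_fixed hG hb hbne v
  obtain ⟨s', hs', h3, h4⟩ := midpoint_fixed hG ha hane (b v)
  rw [h] at h3 h4
  have e1 := G.dist_comm (u := b v) (v := v)
  have e2 := G.dist_comm (u := b v) (v := s')
  have e3 := G.dist_comm (u := s') (v := v)
  have : s = s' := geod_unique hG h1 (by omega) (by omega)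
  subst this
  exact hdis s hs' hs

/-- `IsAxis G t L l` says that `t` moves every vertex by at least `l ≥ 2`, and that `L` is the
set of vertices moved by exactly `l`. -/
structure IsAxis (G : SimpleGraph V) (t : Equiv.Perm V) (L : Set V) (l : ℕ) : Prop where
  two_le : 2 ≤ l
  le : ∀ v, l ≤ G.dist v (t v)
  mem : ∀ v, v ∈ L ↔ G.dist v (t v) ≤ l
  nonempty : L.Nonempty

lemma exists_axis (hG : G.IsTree) {t : Equiv.Perm V}
    (heven : ∀ v, G.dist v (t v) % 2 = 0) (hfix : ∀ v, t v ≠ v) :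
    ∃ L l, IsAxis G t L l := by
  obtain ⟨v₀⟩ := hG.connected.nonempty
  obtain ⟨s, -, hmin⟩ := WellFounded.has_min
    (InvImage.wf (fun c => G.dist c (t c)) Nat.lt_wfRel.wf) Set.univ ⟨v₀, trivial⟩
  refine ⟨{v | G.dist v (t v) ≤ G.dist s (t s)}, G.dist s (t s), ?_,
    fun v => not_lt.1 (hmin v trivial), fun v => Iff.rfl, ⟨s, by simp⟩⟩
  have h1 := hG.connected.pos_dist_of_ne (hfix s).symm
  have h2 := heven s
  omega

namespace IsAxis

variable {t : Equiv.Perm V} {L : Set V} {l : ℕ}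

lemma dist_eq (hL : IsAxis G t L l) {v : V} (hv : v ∈ L) : G.dist v (t v) = l :=
  le_antisymm ((hL.mem v).1 hv) (hL.le v)

lemma closed (hG : G.IsTree) (ht : t ∈ autGroup G) (hL : IsAxis G t L l) : GeodClosed G L := by
  have : L = {v | G.dist v (t v) ≤ l} := by ext v; exact hL.mem v
  rw [this]; exact disp_closed hG ht l

lemma map_mem_iff (hG : G.IsTree) (ht : t ∈ autGroup G) (hL : IsAxis G t L l) (v : V) :
    t v ∈ L ↔ v ∈ L := by
  rw [hL.mem, hL.mem, aut_dist hG ht]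

lemma pow_mem_iff (hG : G.IsTree) (ht : t ∈ autGroup G) (hL : IsAxis G t L l) (k : ℕ) (v : V) :
    (t ^ k) v ∈ L ↔ v ∈ L := by
  induction k with
  | zero => simp
  | succ k ih => rw [pow_succ', Equiv.Perm.mul_apply, hL.map_mem_iff hG ht, ih]

/-- On its axis `t` moves along a geodesic: `t v` lies on `[v, t² v]`. -/
lemma dist_sq (hG : G.IsTree) (ht : t ∈ autGroup G) (hL : IsAxis G t L l) {v : V} (hv : v ∈ L) :
    G.dist v (t (t v)) = 2 * l := by
  have h2 := hL.two_le
  have hd := hL.dist_eq hv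
  have hne : v ≠ t v := by
    intro h
    rw [← h] at hd
    simp at hd
    omega
  obtain ⟨m, hm, hmd⟩ := exists_toward hG hne
  have a1 := SimpleGraph.dist_eq_one_iff_adj.2 hm
  have a2 : G.dist (t v) (t m) = 1 := by rw [aut_dist hG ht, a1]
  have a3 : G.dist m (t m) = l := by
    have := hL.le m
    have := hG.connected.dist_triangle (u := m) (v := t v) (w := t m)
    omega
  have a4 : G.dist v (t m) = l + 1 := by
    rcases geod_or hG (u := m) (w := t m) (z := t v) (by omega) v with h | h
    · have e := G.dist_comm (u := m) (v := t v)
      omega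
    · omega
  have a5 : G.dist (t v) (t (t v)) = l := by rw [aut_dist hG ht, hd]
  have a6 : G.dist (t m) (t (t v)) + 1 = l := by rw [aut_dist hG ht, ← hmd, hd]
  rcases geod_or hG (u := t v) (w := t (t v)) (z := t m) (by omega) v with h | h
  · have e := G.dist_comm (u := t m) (v := t v)
    omega
  · omega

lemma dist_pow (hG : G.IsTree) (ht : t ∈ autGroup G) (hL : IsAxis G t L l) {v : V} (hv : v ∈ L)
    (k : ℕ) : G.dist v ((t ^ k) v) = k * l ∧ G.dist v ((t ^ (k + 1)) v) = (k + 1) * l := by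
  have h2 := hL.two_le
  induction k with
  | zero => simp [hL.dist_eq hv]
  | succ k ih =>
    refine ⟨ih.2, ?_⟩
    have hz : (t ^ k) v ∈ L := (hL.pow_mem_iff hG ht k v).2 hv
    have b1 := hL.dist_sq hG ht hz
    have b2 := hL.dist_eq hz
    have b3 := hL.dist_eq ((hL.map_mem_iff hG ht _).2 hz)
    have c1 : (t ^ (k + 1)) v = t ((t ^ k) v) := by rw [pow_succ', Equiv.Perm.mul_apply]
    have c2 : (t ^ (k + 1 + 1)) v = t (t ((t ^ k) v)) := by
      rw [pow_succ', Equiv.Perm.mul_apply, c1]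
    rw [c1] at ih
    rw [c2]
    have e := G.dist_comm (u := t ((t ^ k) v)) (v := (t ^ k) v)
    have r1 : (k + 1) * l = k * l + l := by ring
    have r2 : (k + 1 + 1) * l = k * l + l + l := by ring
    rcases geod_or hG (u := (t ^ k) v) (w := t (t ((t ^ k) v))) (z := t ((t ^ k) v))
      (by omega) v with h | h <;> omega

/-- A neighbour on the axis lies towards `t v` or towards `t⁻¹ v`. -/
lemma nbr (hG : G.IsTree) (ht : t ∈ autGroup G) (hL : IsAxis G t L l) {v w : V} (hv : v ∈ L)
    (hw : w ∈ L) (hvw : G.Adj v w) :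
    G.dist v (t v) = G.dist w (t v) + 1 ∨ G.dist v (t⁻¹ v) = G.dist w (t⁻¹ v) + 1 := by
  by_contra! hcon
  have h2 := hL.two_le
  have hd := hL.dist_eq hv
  have hdw := hL.dist_eq hw
  have h3 := (adj_cases hG hvw (t v)).resolve_left hcon.1
  have h4 := (adj_cases hG hvw (t⁻¹ v)).resolve_left hcon.2
  rw [← aut_dist hG ht w, ← aut_dist hG ht v, perm_apply_inv] at h4
  have e1 := G.dist_comm (u := t v) (v := v)
  have e2 := G.dist_comm (u := t w) (v := v)
  have e3 := G.dist_comm (u := w) (v := v)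
  have a1 := SimpleGraph.dist_eq_one_iff_adj.2 hvw
  have a2 : G.dist (t v) (t w) = 1 := by rw [aut_dist hG ht, a1]
  rcases geod_or hG (u := v) (w := t w) (z := t v) (by omega) w with h | h <;> omega

lemma isPathSet (hG : G.IsTree) (ht : t ∈ autGroup G) (hL : IsAxis G t L l) : IsPathSet G L := by
  refine ⟨hL.nonempty, hL.closed hG ht, fun v hv a ha b hb c hc hva hvb hvc => ?_⟩
  have tw := fun {w w' q : V} (hw : G.Adj v w) (hw' : G.Adj v w') h h' =>
    toward_unique hG (q := q) hw hw' h h'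
  rcases hL.nbr hG ht hv ha hva with h1 | h1 <;> rcases hL.nbr hG ht hv hb hvb with h2 | h2 <;>
    rcases hL.nbr hG ht hv hc hvc with h3 | h3 <;>
    first
    | exact Or.inl (tw hva hvb h1 h2)
    | exact Or.inr (Or.inl (tw hva hvc h1 h3))
    | exact Or.inr (Or.inr (tw hvb hvc h2 h3))

/-- The axis is not the whole tree as soon as the plus group is nontrivial. -/
lemma ne_univ (hG : G.IsTree) (hH : H ≤ autGroup G) {g : Equiv.Perm V}
    (hg : g ∈ plusGroup G H) (hg1 : g ≠ 1) (ht : t ∈ autGroup G) (hL : IsAxis G t L l) :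
    L ≠ Set.univ := by
  intro huniv
  have hmem : ∀ v, v ∈ L := fun v => by rw [huniv]; trivial
  have hne : ∀ v, v ≠ t v := by
    intro v h
    have h1 := hL.dist_eq (hmem v)
    have h2 := hL.two_le
    rw [← h] at h1
    simp at h1
    omega
  have hne' : ∀ v, v ≠ t⁻¹ v := by
    intro v h
    exact hne v (by rw [h, perm_apply_inv, ← h])
  choose α hα hα' using fun v => exists_toward hG (hne v)
  choose β hβ hβ' using fun v => exists_toward hG (hne' v)
  refine hg1 (plus_trivial_of_deg_two hG hH α β (fun v w hvw => ?_) hg)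
  rcases hL.nbr hG ht (hmem v) (hmem w) hvw with h | h
  · exact Or.inl (toward_unique hG hvw (hα v) h (hα' v))
  · exact Or.inr (toward_unique hG hvw (hβ v) h (hβ' v))

lemma conj (hG : G.IsTree) (hL : IsAxis G t L l) {k : Equiv.Perm V} (hk : k ∈ autGroup G) :
    IsAxis G (k * t * k⁻¹) {v | k⁻¹ v ∈ L} l := by
  have key : ∀ v, G.dist v ((k * t * k⁻¹) v) = G.dist (k⁻¹ v) (t (k⁻¹ v)) := by
    intro v
    rw [← aut_dist hG hk (k⁻¹ v), perm_apply_inv]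
    rfl
  refine ⟨hL.two_le, fun v => ?_, fun v => ?_, ?_⟩
  · rw [key]; exact hL.le _
  · rw [key]; exact hL.mem _
  · obtain ⟨s, hs⟩ := hL.nonempty
    exact ⟨k s, by simpa using hs⟩

end IsAxis

end Axes

/-! ### Translations in the conjugacy class and the commutator argument -/

section Main

variable {G : SimpleGraph V} {H : Subgroup (Equiv.Perm V)}

lemma conj_mem_class {N : Subgroup (Equiv.Perm V)} {g t e : Equiv.Perm V} (he : e ∈ N)
    (ht : t ∈ conjClassIn N g ∪ conjClassIn N g * conjClassIn N g) :
    e * t * e⁻¹ ∈ conjClassIn N g ∪ conjClassIn N g * conjClassIn N g := by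
  have key : ∀ a ∈ conjClassIn N g, e * a * e⁻¹ ∈ conjClassIn N g := by
    rintro _ ⟨c, hc, rfl⟩
    exact ⟨e * c, N.mul_mem he hc, by group⟩
  rcases ht with ht | ht
  · exact Or.inl (key t ht)
  · obtain ⟨a, ha, b, hb, rfl⟩ := Set.mem_mul.1 ht
    exact Or.inr (Set.mem_mul.2 ⟨_, key a ha, _, key b hb, by group⟩)

lemma inv_mem_class {N : Subgroup (Equiv.Perm V)} {g t : Equiv.Perm V}
    (ht : t ∈ conjClassIn N g ∪ conjClassIn N g * conjClassIn N g) :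
    t⁻¹ ∈ conjClassIn N g⁻¹ ∪ conjClassIn N g⁻¹ * conjClassIn N g⁻¹ := by
  have key : ∀ a ∈ conjClassIn N g, a⁻¹ ∈ conjClassIn N g⁻¹ := by
    rintro _ ⟨c, hc, rfl⟩
    exact ⟨c, hc, by group⟩
  rcases ht with ht | ht
  · exact Or.inl (key t ht)
  · obtain ⟨a, ha, b, hb, rfl⟩ := Set.mem_mul.1 ht
    exact Or.inr (Set.mem_mul.2 ⟨_, key b hb, _, key a ha, by group⟩)

lemma class_le {N : Subgroup (Equiv.Perm V)} {g t : Equiv.Perm V} (hg : g ∈ N)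
    (ht : t ∈ conjClassIn N g ∪ conjClassIn N g * conjClassIn N g) : t ∈ N := by
  have key : ∀ a ∈ conjClassIn N g, a ∈ N := by
    rintro _ ⟨c, hc, rfl⟩
    exact N.mul_mem (N.mul_mem hc hg) (N.inv_mem hc)
  rcases ht with ht | ht
  · exact key t ht
  · obtain ⟨a, ha, b, hb, rfl⟩ := Set.mem_mul.1 ht
    exact N.mul_mem (key a ha) (key b hb)

/-- `C ∪ C·C` contains a fixed-point-free element: `g` itself, or the product of `g` with a
conjugate whose fixed tree is disjoint from that of `g`. -/
lemma exists_fixfree (hG : G.IsTree) (hH : H ≤ autGroup G)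
    (hsub : NoInvariantSubtree G H) (hend : NoStabilizedEnd G H) {g : Equiv.Perm V}
    (hg : g ∈ plusGroup G H) (hg1 : g ≠ 1) :
    ∃ t ∈ conjClassIn (plusGroup G H) g ∪
        conjClassIn (plusGroup G H) g * conjClassIn (plusGroup G H) g, ∀ v, t v ≠ v := by
  have hself : g ∈ conjClassIn (plusGroup G H) g := ⟨1, one_mem _, by simp⟩
  by_cases hne : {z | g z = z}.Nonempty
  · have hga := hH (plus_le hg)
    have hun : {z | g z = z} ≠ Set.univ := by
      intro h
      apply hg1
      ext v
      have hv : v ∈ {z | g z = z} := by rw [h]; trivial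
      exact hv
    obtain ⟨k, hk, hdis⟩ := plus_disjoint_translate hG hH hsub hend hg hg1
      (fix_closed hG hga) hun
    have hconj : k⁻¹ * g * k⁻¹⁻¹ ∈ conjClassIn (plusGroup G H) g := ⟨k⁻¹, inv_mem hk, rfl⟩
    refine ⟨g * (k⁻¹ * g * k⁻¹⁻¹), Or.inr (Set.mem_mul.2 ⟨_, hself, _, hconj, rfl⟩), ?_⟩
    refine mul_no_fix hG hga (hH (plus_le (class_le hg (Or.inl hconj)))) hne ?_ ?_
    · obtain ⟨z, hz⟩ := hne
      have hz' : g z = z := hz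
      exact ⟨k⁻¹ z, by simp [hz']⟩
    · intro z hz hz'
      apply hdis z hz
      simp only [inv_inv, Equiv.Perm.mul_apply] at hz'
      show g (k z) = k z
      rw [← perm_apply_inv k (g (k z)), hz']
  · refine ⟨g, Or.inl hself, fun v hv => hne ⟨v, hv⟩⟩

/-- Every half-tree contains the axis of a translation in `C ∪ C·C`. -/
lemma exists_axis_in_half (hG : G.IsTree) (hH : H ≤ autGroup G)
    (hsub : NoInvariantSubtree G H) (hend : NoStabilizedEnd G H) {g : Equiv.Perm V}
    (hg : g ∈ plusGroup G H) (hg1 : g ≠ 1) {a b : V} (hab : G.Adj a b) :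
    ∃ t ∈ conjClassIn (plusGroup G H) g ∪
        conjClassIn (plusGroup G H) g * conjClassIn (plusGroup G H) g,
      ∃ L l, IsAxis G t L l ∧ ∀ z ∈ L, G.dist z b < G.dist z a := by
  obtain ⟨t, htC, hfix⟩ := exists_fixfree hG hH hsub hend hg hg1
  have htN := class_le hg htC
  have hta := hH (plus_le htN)
  obtain ⟨L, l, hL⟩ := exists_axis hG (plus_even hG hH htN) hfix
  have hcl := hL.closed hG hta
  obtain ⟨k, hk, hdis⟩ := plus_disjoint_translate hG hH hsub hend hg hg1 hcl
    (hL.ne_univ hG hH hg hg1 hta)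
  have hka := hH (plus_le hk)
  obtain ⟨c, d, hcd, hLc, hLd⟩ := exists_separating_edge hG hcl (closed_preimage hG hka hcl)
    hL.nonempty (by
      obtain ⟨s, hs⟩ := hL.nonempty
      exact ⟨k⁻¹ s, by simpa using hs⟩) hdis
  -- By minimality the orbit of `c` meets the target half-tree.
  have horb : ∃ f ∈ plusGroup G H, G.dist (f c) b < G.dist (f c) a := by
    by_contra! hcon
    refine plus_minimal hG hH hsub hend hg hg1
      ⟨{v | ∀ f ∈ plusGroup G H, f v ∈ {z | G.dist z a < G.dist z b}}, ⟨c, ?_⟩, ?_, ?_,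
      image_eq_of_invariant ?_⟩
    · intro f hf
      exact (side_cases hG hab (f c)).resolve_right (not_lt.2 (hcon f hf))
    · intro h
      have hb : b ∈ {v | ∀ f ∈ plusGroup G H, f v ∈ {z | G.dist z a < G.dist z b}} := by
        rw [h]; trivial
      have := hb 1 (one_mem _)
      simp at this
    · intro u hu w hw z hz f hf
      exact closed_preimage hG (hH (plus_le hf)) (half_closed hG hab) u (hu f hf) w (hw f hf) z hz
    · intro f hf v hv f' hf'
      exact hv (f' * f) (mul_mem hf' hf)
  obtain ⟨f, hf, hfc⟩ := horb
  have hfa := hH (plus_le hf)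
  have hmove : ∀ z w, G.dist (f⁻¹ z) w = G.dist z (f w) := fun z w => by
    rw [← aut_dist hG hfa (f⁻¹ z), perm_apply_inv]
  rcases half_subset hG ((hfa c d).2 hcd) hfc with h | h
  · refine ⟨f * t * f⁻¹, conj_mem_class hf htC, _, l, hL.conj hG hfa, fun z hz => h z ?_⟩
    have := hLc _ hz
    rwa [hmove, hmove] at this
  · have hfk : f * k⁻¹ ∈ plusGroup G H := mul_mem hf (inv_mem hk)
    refine ⟨_, conj_mem_class hfk htC, _, l, hL.conj hG (hH (plus_le hfk)),
      fun z hz => h z ?_⟩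
    have hz' : f⁻¹ z ∈ {v | k v ∈ L} := by simpa using hz
    have := hLd _ hz'
    rwa [hmove, hmove] at this

/-- Tits' commutator argument: if the half-tree on the `b`-side contains the axis of `t` and is
fixed pointwise by `h`, then `h` is a commutator `[e, t]`, where `e` is the infinite product of
`t ^ k * h * t ^ (-k)`, `k ≥ 0`; it exists by property (P) because the factors are supported over
different vertices of the axis. -/
lemma exists_commutator (hG : G.IsTree) (hH : H ≤ autGroup G) (hP : PropertyP G H)
    {t h : Equiv.Perm V} (htH : t ∈ H) (hhH : h ∈ H) {L : Set V} {l : ℕ} (hL : IsAxis G t L l)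
    {a b : V} (hab : G.Adj a b) (hLb : ∀ z ∈ L, G.dist z b < G.dist z a)
    (hfix : ∀ z, G.dist z b < G.dist z a → h z = z) :
    ∃ e ∈ plusGroup G H, h = e * t * e⁻¹ * t⁻¹ := by
  classical
  have hta := hH htH
  have hcl := hL.closed hG hta
  choose p hpL hpmin using fun q => exists_nearest (G := G) hL.nonempty q
  have hp_eq : ∀ q s, s ∈ L → (∀ c ∈ L, G.dist q s ≤ G.dist q c) → p q = s := fun q s hs hm =>
    nearest_unique hG hcl (hpL q) (hpmin q) hs hm
  have hpowa : ∀ k : ℕ, t ^ k ∈ autGroup G := fun k => pow_mem hta k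
  have hp_pow : ∀ (k : ℕ) q, p ((t ^ k) q) = (t ^ k) (p q) := by
    intro k q
    refine hp_eq _ _ ((hL.pow_mem_iff hG hta k _).2 (hpL q)) fun c hc => ?_
    have hc' : (t ^ k)⁻¹ c ∈ L := by
      rw [← hL.pow_mem_iff hG hta k, perm_apply_inv]; exact hc
    have := hpmin q _ hc'
    rw [aut_dist hG (hpowa k), ← aut_dist hG (hpowa k) q ((t ^ k)⁻¹ c), perm_apply_inv] at *
    exact this
  have hp_side : ∀ z, G.dist z a < G.dist z b → p z = p b := by
    intro z hz
    refine hp_eq z _ (hpL b) fun c hc => ?_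
    rw [across hG hab hz (hLb _ hc), across hG hab hz (hLb _ (hpL b))]
    have := hpmin b c hc
    omega
  set v₀ := p b with hv₀
  have hinj : ∀ i j : ℕ, (t ^ i) v₀ = (t ^ j) v₀ → i = j := by
    intro i j hij
    have h1 := (hL.dist_pow hG hta (hpL b) i).1
    have h2 := (hL.dist_pow hG hta (hpL b) j).1
    rw [← hv₀] at h1 h2
    rw [hij, h2] at h1
    have := hL.two_le
    exact (Nat.eq_of_mul_eq_mul_right (by omega) h1).symm
  -- The translates of the `a`-side by distinct powers of `t` are disjoint.
  have hdis : ∀ (k : ℕ) z, G.dist z a < G.dist z b →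
      G.dist ((t ^ (k + 1)) z) b < G.dist ((t ^ (k + 1)) z) a := by
    intro k z hz
    refine (side_cases hG hab _).resolve_left fun h' => ?_
    have h1 := hp_side _ h'
    rw [hp_pow, hp_side z hz] at h1
    have := hinj (k + 1) 0 (by simpa using h1)
    omega
  have hside : ∀ z, G.dist z a < G.dist z b → G.dist (h z) a < G.dist (h z) b := by
    intro z hz
    refine (side_cases hG hab _).resolve_right fun h' => ?_
    have h1 := h.injective (hfix _ h')
    rw [h1] at h'
    omega
  let gs : V → Equiv.Perm V := fun s =>
    if hs : ∃ k : ℕ, s = (t ^ k) v₀ then t ^ hs.choose * h * (t ^ hs.choose)⁻¹ else 1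
  have hgs : ∀ k : ℕ, gs ((t ^ k) v₀) = t ^ k * h * (t ^ k)⁻¹ := by
    intro k
    have hs : ∃ j : ℕ, (t ^ k) v₀ = (t ^ j) v₀ := ⟨k, rfl⟩
    have hk := hinj _ _ hs.choose_spec
    simp only [gs, dif_pos hs, ← hk]
  have hgs' : ∀ s, (¬ ∃ k : ℕ, s = (t ^ k) v₀) → gs s = 1 := fun s hs => dif_neg hs
  obtain ⟨e, ⟨heH, heL, he⟩, -⟩ := hP L (hL.isPathSet hG hta) p
    (fun q => ⟨hpL q, hpmin q⟩) gs (by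
      intro s _
      by_cases hs : ∃ k : ℕ, s = (t ^ k) v₀
      · obtain ⟨k, rfl⟩ := hs
        rw [hgs]
        refine ⟨H.mul_mem (H.mul_mem (pow_mem htH k) hhH) (H.inv_mem (pow_mem htH k)),
          fun c hc => ?_⟩
        have hc' : (t ^ k)⁻¹ c ∈ L := by
          rw [← hL.pow_mem_iff hG hta k, perm_apply_inv]; exact hc
        rw [Equiv.Perm.mul_apply, Equiv.Perm.mul_apply, hfix _ (hLb _ hc'), perm_apply_inv]
      · rw [hgs' s hs]
        exact ⟨one_mem _, fun c _ => rfl⟩)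
  have he_on : ∀ (k : ℕ) z, G.dist z a < G.dist z b → e ((t ^ k) z) = (t ^ k) (h z) := by
    intro k z hz
    have h1 : p ((t ^ k) z) = (t ^ k) v₀ := by rw [hp_pow, hp_side z hz]
    rw [he _ ((hL.pow_mem_iff hG hta k _).2 (hpL b)) _ h1, hgs, Equiv.Perm.mul_apply,
      Equiv.Perm.mul_apply, perm_inv_apply]
  have he_off : ∀ z, (∀ k : ℕ, G.dist ((t ^ k)⁻¹ z) b < G.dist ((t ^ k)⁻¹ z) a) → e z = z := by
    intro z hz
    rw [he (p z) (hpL z) z rfl]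
    by_cases hs : ∃ k : ℕ, p z = (t ^ k) v₀
    · obtain ⟨k, hk⟩ := hs
      rw [hk, hgs, Equiv.Perm.mul_apply, Equiv.Perm.mul_apply, hfix _ (hz k), perm_apply_inv]
    · rw [hgs' _ hs]; rfl
  have hmain : ∀ z, e (t z) = h (t (e z)) := by
    intro z
    by_cases hz : ∃ k : ℕ, G.dist ((t ^ k)⁻¹ z) a < G.dist ((t ^ k)⁻¹ z) b
    · obtain ⟨k, hk⟩ := hz
      obtain ⟨y, hy⟩ : ∃ y, y = (t ^ k)⁻¹ z := ⟨_, rfl⟩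
      rw [← hy] at hk
      have hzy : z = (t ^ k) y := by rw [hy, perm_apply_inv]
      have hsucc : ∀ x, t ((t ^ k) x) = (t ^ (k + 1)) x := fun x => by
        rw [pow_succ', Equiv.Perm.mul_apply]
      rw [hzy, he_on k y hk, hsucc, hsucc, he_on (k + 1) y hk, hfix _ (hdis k _ (hside y hk))]
    · have hz' : ∀ k : ℕ, G.dist ((t ^ k)⁻¹ z) b < G.dist ((t ^ k)⁻¹ z) a := fun k =>
        (side_cases hG hab _).resolve_left fun h' => hz ⟨k, h'⟩
      rw [he_off z hz']
      rcases side_cases hG hab (t z) with h1 | h1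
      · simpa using he_on 0 (t z) h1
      · rw [hfix _ h1]
        refine he_off _ fun k => ?_
        cases k with
        | zero => simpa using h1
        | succ k =>
          have : (t ^ (k + 1))⁻¹ (t z) = (t ^ k)⁻¹ z := by
            rw [pow_succ', mul_inv_rev, Equiv.Perm.mul_apply, perm_inv_apply]
          rw [this]; exact hz' k
  refine ⟨e, ?_, ?_⟩
  · obtain ⟨v, hv⟩ := hL.nonempty
    have htv := (hL.map_mem_iff hG hta v).2 hv
    have hne : v ≠ t v := by
      intro h'
      have h1 := hL.dist_eq hv
      have h2 := hL.two_le
      rw [← h'] at h1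
      simp at h1
      omega
    obtain ⟨m, hm, hmd⟩ := exists_toward hG hne
    have hmL : m ∈ L := hcl v hv _ htv m (by
      have := SimpleGraph.dist_eq_one_iff_adj.2 hm
      unfold OnGeodesic
      omega)
    exact plus_of_fix heH hm (heL v hv) (heL m hmL)
  · have h1 : e * t = h * t * e := by
      ext z
      exact hmain z
    rw [h1]; group

/-- By property (P) for the edge `{x, y}`, an element of its pointwise stabilizer is the product
of two elements fixing pointwise one half-tree each. -/
lemma split_edge (hG : G.IsTree) (hP : PropertyP G H) {x y : V}
    (hxy : G.Adj x y) {h : Equiv.Perm V} (hhH : h ∈ H) (hhx : h x = x) (hhy : h y = y) :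
    ∃ h₁ ∈ H, ∃ h₂ ∈ H, h = h₁ * h₂ ∧ (∀ z, G.dist z y < G.dist z x → h₁ z = z) ∧
      ∀ z, G.dist z x < G.dist z y → h₂ z = z := by
  classical
  let p : V → V := fun z => if G.dist z x < G.dist z y then x else y
  have h1 := SimpleGraph.dist_eq_one_iff_adj.2 hxy
  have hpath : IsPathSet G {x, y} := by
    refine ⟨⟨x, by simp⟩, ?_, ?_⟩
    · intro u hu w hw z hz
      have hc := fun u v => hG.connected.dist_eq_zero_iff (u := u) (v := v)
      have e1 := G.dist_comm (u := x) (v := y)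
      simp only [Set.mem_insert_iff, Set.mem_singleton_iff] at hu hw ⊢
      unfold OnGeodesic at hz
      rcases hu with rfl | rfl <;> rcases hw with rfl | rfl
      · rw [G.dist_self] at hz
        exact Or.inl ((hc _ _).1 (by omega)).symm
      · rcases Nat.eq_zero_or_pos (G.dist u z) with h0 | h0
        · exact Or.inl ((hc _ _).1 h0).symm
        · exact Or.inr ((hc _ _).1 (by omega))
      · rcases Nat.eq_zero_or_pos (G.dist u z) with h0 | h0
        · exact Or.inr ((hc _ _).1 h0).symm
        · exact Or.inl ((hc _ _).1 (by omega))
      · rw [G.dist_self] at hz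
        exact Or.inr ((hc _ _).1 (by omega)).symm
    · intro v hv a ha b hb c hc _ _ _
      simp only [Set.mem_insert_iff, Set.mem_singleton_iff] at ha hb hc
      grind
  have hproj : IsProj G {x, y} p := by
    intro z
    simp only [p]
    split_ifs with hz
    · refine ⟨by simp, ?_⟩
      rintro c (rfl | rfl)
      · exact le_rfl
      · exact hz.le
    · refine ⟨by simp, ?_⟩
      rintro c (rfl | rfl)
      · exact not_lt.1 hz
      · exact le_rfl
  obtain ⟨h₁, ⟨hh₁, -, hh₁'⟩, -⟩ := hP _ hpath p hproj (fun s => if s = x then h else 1) (by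
    intro s _
    split_ifs
    · refine ⟨hhH, ?_⟩
      rintro c (rfl | rfl)
      · exact hhx
      · exact hhy
    · exact ⟨one_mem _, fun _ _ => rfl⟩)
  refine ⟨h₁, hh₁, h₁⁻¹ * h, H.mul_mem (H.inv_mem hh₁) hhH, by group, fun z hz => ?_,
    fun z hz => ?_⟩
  · have := hh₁' y (by simp) z (by simp only [p]; rw [if_neg (by omega)])
    rw [if_neg hxy.ne'] at this
    exact this
  · have := hh₁' x (by simp) z (by simp only [p]; rw [if_pos hz])
    rw [if_pos rfl] at this
    rw [Equiv.Perm.mul_apply, ← this, perm_inv_apply]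

end Main

/-- strengthened Tits theorem; every element of the pointwise
stabilizer in `G` of an edge is a product `c₁·c₂·d₁·d₂` with `cᵢ ∈ C ∪ C·C`,
`dᵢ ∈ D ∪ D·D`, `C`, `D` the conjugacy classes of `g`, `g⁻¹` in `G⁺`. -/
theorem edge_stabilizer_in_conjugates (G : SimpleGraph V) (hG : G.IsTree)
    (H : Subgroup (Equiv.Perm V)) (hH : H ≤ autGroup G)
    (hP : PropertyP G H) (hsub : NoInvariantSubtree G H)
    (hend : NoStabilizedEnd G H)
    (g : Equiv.Perm V) (hg : g ∈ plusGroup G H) (hg1 : g ≠ 1)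
    (x y : V) (hxy : G.Adj x y)
    (h : Equiv.Perm V) (hhH : h ∈ H) (hhx : h x = x) (hhy : h y = y) :
    ∃ c₁ c₂ d₁ d₂ : Equiv.Perm V,
      c₁ ∈ conjClassIn (plusGroup G H) g ∪
        conjClassIn (plusGroup G H) g * conjClassIn (plusGroup G H) g ∧
      c₂ ∈ conjClassIn (plusGroup G H) g ∪
        conjClassIn (plusGroup G H) g * conjClassIn (plusGroup G H) g ∧
      d₁ ∈ conjClassIn (plusGroup G H) g⁻¹ ∪
        conjClassIn (plusGroup G H) g⁻¹ * conjClassIn (plusGroup G H) g⁻¹ ∧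
      d₂ ∈ conjClassIn (plusGroup G H) g⁻¹ ∪
        conjClassIn (plusGroup G H) g⁻¹ * conjClassIn (plusGroup G H) g⁻¹ ∧
      h = c₁ * c₂ * d₁ * d₂ := by
  obtain ⟨h₁, hh₁, h₂, hh₂, rfl, hf₁, hf₂⟩ := split_edge hG hP hxy hhH hhx hhy
  obtain ⟨t₁, ht₁, L₁, l₁, hL₁, hs₁⟩ := exists_axis_in_half hG hH hsub hend hg hg1 hxy
  obtain ⟨t₂, ht₂, L₂, l₂, hL₂, hs₂⟩ := exists_axis_in_half hG hH hsub hend hg hg1 hxy.symm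
  obtain ⟨e₁, he₁, rfl⟩ := exists_commutator hG hH hP (plus_le (class_le hg ht₁)) hh₁ hL₁ hxy
    hs₁ hf₁
  obtain ⟨e₂, he₂, rfl⟩ := exists_commutator hG hH hP (plus_le (class_le hg ht₂)) hh₂ hL₂
    hxy.symm hs₂ hf₂
  have hc₂ := conj_mem_class he₂ ht₂
  -- `c₁ d₁ c₂ d₂` is rearranged by conjugating `d₁` with `c₂`.
  refine ⟨e₁ * t₁ * e₁⁻¹, e₂ * t₂ * e₂⁻¹,
    (e₂ * t₂ * e₂⁻¹)⁻¹ * t₁⁻¹ * (e₂ * t₂ * e₂⁻¹)⁻¹⁻¹, t₂⁻¹, conj_mem_class he₁ ht₁, hc₂,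
    conj_mem_class (inv_mem (class_le hg hc₂)) (inv_mem_class ht₁), inv_mem_class ht₂, ?_⟩
  group

end BSTrees
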